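/- Let m ≥ 2, let h be a smooth positive function on a neighborhood of 0 in ℝ^m, fix two distinct indices i, j ∈ {1,…,m}, and set κ = (∂²(log h)/∂x_i∂x_j)(0). Then there exists ε > 0 such that for all u, v ∈ ℝ^m with 0 < u_k < ε and −ε < v_k < 0 for every k, the following holds. For signs s, t ∈ {+,−} let V_{st} denote the integral of h over the box ∏_{k=1}^m I_k, where I_i = [0,u_i] if s = + and I_i = [v_i,0] if s = −, I_j = [0,u_j] if t = + and I_j = [v_j,0] if t = −, and I_k = [v_k,u_k] for k ∉ {i,j}. Then: if κ > 0 then V_{−+}·V_{+−} < V_{++}·V_{−−}, and if κ < 0 then V_{−+}·V_{+−} > V_{++}·V_{−−}. -/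

import Mathlib

open MeasureTheory

noncomputable section

/-- Second mixed partial derivative `∂²(log h)/∂x_i∂x_j` at `x`. -/
def logpd2 {m : ℕ} (h : (Fin m → ℝ) → ℝ) (k l : Fin m) (x : Fin m → ℝ) : ℝ :=
  fderiv ℝ (fun y => fderiv ℝ (fun z => Real.log (h z)) y (Pi.single k (1:ℝ)))
    x (Pi.single l 1)

/-- The `h`-volume `V_{st}` of the subbox of `∏_k [v_k,u_k]` determined by the signs
`s` (for coordinate `i`: `+` gives `[0,u_i]`, `−` gives `[v_i,0]`) and `t` (likewise for
coordinate `j`), the remaining factors being `[v_k,u_k]`. -/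
def boxVol {m : ℕ} (h : (Fin m → ℝ) → ℝ) (i j : Fin m) (u v : Fin m → ℝ)
    (s t : Bool) : ℝ :=
  ∫ x in Set.Icc
      (fun k => if k = i then (if s then 0 else v i)
        else if k = j then (if t then 0 else v j) else v k)
      (fun k => if k = i then (if s then u i else 0)
        else if k = j then (if t then u j else 0) else u k),
    h x


def Taff {m : ℕ} (c d : Fin m → ℝ) (y : Fin m → ℝ) : Fin m → ℝ := fun k => c k + d k * y k

lemma sq_arith (σ α β γ δ : ℝ) (h : 0 < σ * (α * δ - β * γ)) :
    ∃ η > 0, ∀ α' β' γ' δ' : ℝ, |α' - α| ≤ η → |β' - β| ≤ η → |γ' - γ| ≤ η → |δ' - δ| ≤ η →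
      0 < σ * (α' * δ' - β' * γ') := by
  have ho : IsOpen {q : ℝ × ℝ × ℝ × ℝ | 0 < σ * (q.1 * q.2.2.2 - q.2.1 * q.2.2.1)} :=
    isOpen_lt (by fun_prop) (by fun_prop)
  obtain ⟨r, hr, hb⟩ := Metric.isOpen_iff.1 ho (α, β, γ, δ) h
  refine ⟨r / 2, by positivity, fun a b c d ha hb' hc hd => ?_⟩
  have : (a, b, c, d) ∈ Metric.ball (α, β, γ, δ) r := by
    simp only [Metric.mem_ball, Prod.dist_eq, Real.dist_eq, max_lt_iff]
    refine ⟨?_, ?_, ?_, ?_⟩ <;> linarith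
  exact hb this

lemma mvt_line (φ φ' : ℝ → ℝ) (β η t : ℝ) (ht : 0 ≤ t)
    (hd : ∀ s ∈ Set.Icc 0 t, HasDerivAt φ (φ' s) s)
    (hb : ∀ s ∈ Set.Icc 0 t, |φ' s - β| ≤ η) : |φ t - φ 0 - β * t| ≤ η * t := by
  have := norm_image_sub_le_of_norm_deriv_le_segment' (f := fun s => φ s - β * s)
    (f' := fun s => φ' s - β) (a := 0) (b := t) (C := η)
    (fun s hs => by
      have := (hd s hs).sub ((hasDerivAt_id s).const_mul β)
      rw [mul_one] at this
      exact this.hasDerivWithinAt)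
    (fun s hs => hb s ⟨hs.1, hs.2.le⟩) t ⟨ht, le_rfl⟩
  simp only [Real.norm_eq_abs] at this
  convert this using 2 <;> ring

lemma line_deriv {m : ℕ} (g : (Fin m → ℝ) → ℝ) (p e : Fin m → ℝ) (s : ℝ)
    (hg : DifferentiableAt ℝ g (p + s • e)) :
    HasDerivAt (fun s : ℝ => g (p + s • e)) (fderiv ℝ g (p + s • e) e) s := by
  have h1 : HasDerivAt (fun s : ℝ => p + s • e) e s := by
    simpa using ((hasDerivAt_id s).smul_const e).const_add p
  exact hg.hasFDerivAt.comp_hasDerivAt s h1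

lemma seg_mem {m : ℕ} {B : Set (Fin m → ℝ)} (hB : Convex ℝ B) (p e : Fin m → ℝ) (s t : ℝ)
    (hp : p ∈ B) (hq : p + t • e ∈ B) (hs : s ∈ Set.Icc 0 t) : p + s • e ∈ B := by
  rcases eq_or_lt_of_le (hs.1.trans hs.2) with h0 | h0
  · have : s = 0 := le_antisymm (h0 ▸ hs.2) hs.1
    simpa [this] using hp
  have := hB.add_smul_mem hp hq (t := s / t) ⟨div_nonneg hs.1 h0.le, (div_le_one h0).2 hs.2⟩
  rwa [smul_smul, div_mul_cancel₀ _ h0.ne'] at this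

lemma mvt_dir {m : ℕ} (g : (Fin m → ℝ) → ℝ) {B : Set (Fin m → ℝ)} (hB : Convex ℝ B)
    (e : Fin m → ℝ) (β η : ℝ) (hg : ∀ x ∈ B, DifferentiableAt ℝ g x)
    (hb : ∀ x ∈ B, |fderiv ℝ g x e - β| ≤ η) (p : Fin m → ℝ) (t : ℝ) (ht : 0 ≤ t)
    (hp : p ∈ B) (hq : p + t • e ∈ B) : |g (p + t • e) - g p - β * t| ≤ η * t := by
  have := mvt_line (fun s => g (p + s • e)) (fun s => fderiv ℝ g (p + s • e) e) β η t ht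
    (fun s hs => line_deriv g p e s (hg _ (seg_mem hB p e s t hp hq hs)))
    (fun s hs => hb _ (seg_mem hB p e s t hp hq hs))
  simpa using this

lemma mvt_mixed {m : ℕ} (g : (Fin m → ℝ) → ℝ) {B : Set (Fin m → ℝ)} (hB : Convex ℝ B)
    (e e' : Fin m → ℝ) (δ η : ℝ) (hg : ∀ x ∈ B, DifferentiableAt ℝ g x)
    (hg' : ∀ x ∈ B, DifferentiableAt ℝ (fun y => fderiv ℝ g y e) x)
    (hb : ∀ x ∈ B, |fderiv ℝ (fun y => fderiv ℝ g y e) x e' - δ| ≤ η)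
    (p : Fin m → ℝ) (a b : ℝ) (ha : 0 ≤ a) (hb0 : 0 ≤ b)
    (hp : p ∈ B) (hpa : p + a • e ∈ B) (hpb : p + b • e' ∈ B) (hpab : p + b • e' + a • e ∈ B) :
    |g (p + b • e' + a • e) - g (p + a • e) - g (p + b • e') + g p - δ * (a * b)| ≤
      η * (a * b) := by
  have := mvt_line (fun s => g (p + b • e' + s • e) - g (p + s • e))
    (fun s => fderiv ℝ g (p + b • e' + s • e) e - fderiv ℝ g (p + s • e) e) (δ * b) (η * b) a ha
    (fun s hs => (line_deriv g _ e s (hg _ (seg_mem hB _ e s a hpb hpab hs))).sub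
      (line_deriv g p e s (hg _ (seg_mem hB p e s a hp hpa hs))))
    (fun s hs => by
      have h1 := seg_mem hB p e s a hp hpa hs
      have h2 := seg_mem hB _ e s a hpb hpab hs
      rw [add_right_comm] at h2 ⊢
      exact mvt_dir (fun y => fderiv ℝ g y e) hB e' δ η hg' hb _ b hb0 h1 h2)
  simp only [zero_smul, add_zero] at this
  convert this using 1
  · congr 1; ring
  · ring

lemma int_bound {m : ℕ} {S : Set (Fin m → ℝ)} (hS : MeasurableSet S) (f w : (Fin m → ℝ) → ℝ) (β η : ℝ)
    (hf : IntegrableOn f S) (hw : IntegrableOn w S)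
    (hb : ∀ y ∈ S, |f y - β * w y| ≤ η * w y) :
    |(∫ y in S, f y) - β * ∫ y in S, w y| ≤ η * ∫ y in S, w y := by
  rw [← integral_const_mul, ← integral_const_mul, ← integral_sub hf (hw.const_mul β)]
  have h1 : ∀ᵐ y ∂(volume.restrict S), ‖f y - β * w y‖ ≤ η * w y :=
    (ae_restrict_iff' hS).2 (Filter.Eventually.of_forall hb)
  exact norm_integral_le_of_norm_le (hw.const_mul η) h1

lemma prod_int {m : ℕ} (F : Fin m → ℝ → ℝ) :
    ∫ y in Set.Icc (0 : Fin m → ℝ) 1, ∏ k, F k (y k) = ∏ k, ∫ x in Set.Icc (0:ℝ) 1, F k x := by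
  rw [← Set.pi_univ_Icc, volume_pi, Measure.restrict_pi_pi]
  exact integral_fintype_prod_eq_prod (𝕜 := ℝ) F

lemma int_one {m : ℕ} : ∫ _y in Set.Icc (0 : Fin m → ℝ) 1, (1:ℝ) = 1 := by
  have := prod_int (m := m) (fun _ _ => 1)
  simpa using this

lemma int_half : ∫ x in Set.Icc (0:ℝ) 1, x = 1 / 2 := by
  rw [integral_Icc_eq_integral_Ioc, ← intervalIntegral.integral_of_le zero_le_one]
  simp

lemma int_coord {m : ℕ} (i : Fin m) : ∫ y in Set.Icc (0 : Fin m → ℝ) 1, y i = 1 / 2 := by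
  have := prod_int (m := m) (fun k x => if k = i then x else 1)
  simp only [Finset.prod_ite_eq', Finset.mem_univ, if_true] at this
  rw [this, Finset.prod_eq_single i]
  · simpa using int_half
  · intro k _ hk; simp [hk]
  · simp

lemma int_coord2 {m : ℕ} (i j : Fin m) (hij : i ≠ j) :
    ∫ y in Set.Icc (0 : Fin m → ℝ) 1, y i * y j = 1 / 4 := by
  have := prod_int (m := m) (fun k x => (if k = i then x else 1) * (if k = j then x else 1))
  simp only [Finset.prod_mul_distrib, Finset.prod_ite_eq', Finset.mem_univ, if_true] at this
  rw [this]
  have h1 : ∀ k, ∫ x in Set.Icc (0:ℝ) 1, ((if k = i then x else 1) * (if k = j then x else 1)) =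
      (if k = i then 1 / 2 else 1) * (if k = j then 1 / 2 else 1) := by
    intro k
    by_cases h : k = i
    · have h' : k ≠ j := h ▸ hij
      simp only [if_pos h, if_neg h', mul_one]; exact int_half
    · by_cases h' : k = j
      · simp only [if_neg h, if_pos h', one_mul]; exact int_half
      · simp [h, h']
  simp only [h1, Finset.prod_mul_distrib, Finset.prod_ite_eq', Finset.mem_univ, if_true]
  norm_num

lemma change_var {m : ℕ} (c d : Fin m → ℝ) (hd : ∀ k, d k ≠ 0) (h : (Fin m → ℝ) → ℝ) :
    ∫ x in Taff c d '' Set.Icc 0 1, h x =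
      (∏ k, |d k|) * ∫ y in Set.Icc (0 : Fin m → ℝ) 1, h (Taff c d y) := by
  have hder : ∀ y, HasFDerivAt (Taff c d)
      (LinearMap.toContinuousLinearMap (Matrix.toLin' (Matrix.diagonal d))) y := by
    intro y
    have h2 : Taff c d = fun y => c + (LinearMap.toContinuousLinearMap (Matrix.toLin' (Matrix.diagonal d))) y := by
      funext y k
      simp [Taff, Matrix.mulVec_diagonal]
    rw [h2]
    exact (ContinuousLinearMap.hasFDerivAt _).const_add c
  have hinj : Function.Injective (Taff c d) := by
    intro x y hxy
    funext k
    have := congrFun hxy k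
    simp only [Taff, add_right_inj] at this
    exact mul_left_cancel₀ (hd k) this
  rw [integral_image_eq_integral_abs_det_fderiv_smul volume measurableSet_Icc
    (fun y _ => (hder y).hasFDerivWithinAt) hinj.injOn h]
  have hdet : (LinearMap.toContinuousLinearMap (Matrix.toLin' (Matrix.diagonal d))).det = ∏ k, d k := by
    rw [LinearMap.det_toContinuousLinearMap, LinearMap.det_toLin', Matrix.det_diagonal]
  simp only [hdet, smul_eq_mul, integral_const_mul, Finset.abs_prod]

lemma image_box {m : ℕ} (c d lo hi : Fin m → ℝ)
    (H : ∀ k, (0 < d k ∧ lo k = c k ∧ hi k = c k + d k) ∨ (d k < 0 ∧ hi k = c k ∧ lo k = c k + d k)) :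
    Taff c d '' Set.Icc 0 1 = Set.Icc lo hi := by
  ext x
  simp only [Set.mem_image, Set.mem_Icc, Pi.le_def, Pi.zero_apply, Pi.one_apply]
  constructor
  · rintro ⟨y, ⟨h0, h1⟩, rfl⟩
    refine ⟨fun k => ?_, fun k => ?_⟩ <;> simp only [Taff] <;> have := h0 k <;> have := h1 k <;>
      rcases H k with ⟨hd, h1, h2⟩ | ⟨hd, h1, h2⟩ <;> simp only [h1, h2] <;> nlinarith
  · rintro ⟨h0, h1⟩
    refine ⟨fun k => (x k - c k) / d k, ⟨fun k => ?_, fun k => ?_⟩, ?_⟩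
    · have := h0 k; have := h1 k
      rcases H k with ⟨hd, h1, h2⟩ | ⟨hd, h1, h2⟩
      · exact div_nonneg (by linarith) hd.le
      · exact div_nonneg_of_nonpos (by linarith) hd.le
    · have := h0 k; have := h1 k
      rcases H k with ⟨hd, h1, h2⟩ | ⟨hd, h1, h2⟩
      · rw [div_le_one hd]; linarith
      · rw [div_le_one_of_neg hd]; linarith
    · funext k
      have : d k ≠ 0 := by rcases H k with ⟨hd, _⟩ | ⟨hd, _⟩; exacts [hd.ne', hd.ne]
      simp only [Taff]; field_simp; ring

lemma logpd2_eq {m : ℕ} (i j : Fin m) (h : (Fin m → ℝ) → ℝ)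
    (V : Set (Fin m → ℝ)) (hV : IsOpen V) (h0V : (0 : Fin m → ℝ) ∈ V)
    (hd : ∀ x ∈ V, DifferentiableAt ℝ h x)
    (hd2 : DifferentiableAt ℝ (fun y => fderiv ℝ h y (Pi.single i (1:ℝ))) 0)
    (hpos : ∀ x ∈ V, 0 < h x) :
    h 0 * fderiv ℝ (fun y => fderiv ℝ h y (Pi.single i (1:ℝ))) 0 (Pi.single j 1) -
      fderiv ℝ h 0 (Pi.single i 1) * fderiv ℝ h 0 (Pi.single j 1) = (h 0) ^ 2 * logpd2 h i j 0 := by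
  have hev : (fun y => fderiv ℝ (fun z => Real.log (h z)) y (Pi.single i (1:ℝ))) =ᶠ[nhds 0]
      fun y => (h y)⁻¹ * fderiv ℝ h y (Pi.single i (1:ℝ)) := by
    filter_upwards [hV.mem_nhds h0V] with y hy
    rw [fderiv.log (hd y hy) (hpos y hy).ne']
    simp
  have h0 := (hpos 0 h0V).ne'
  unfold logpd2
  rw [hev.fderiv_eq]
  have hh := (hd 0 h0V).hasFDerivAt
  have h1 := (hasDerivAt_inv h0).comp_hasFDerivAt (0 : Fin m → ℝ) hh
  have h2 := h1.mul hd2.hasFDerivAt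
  have h3 := h2.fderiv
  have h4 : fderiv ℝ (fun y => (h y)⁻¹ * fderiv ℝ h y (Pi.single i (1:ℝ))) 0 = _ := h3
  rw [h4]
  simp
  field_simp
  ring

lemma analytic {m : ℕ} (i j : Fin m) (h : (Fin m → ℝ) → ℝ)
    (V : Set (Fin m → ℝ)) (hV : IsOpen V) (h0V : (0 : Fin m → ℝ) ∈ V)
    (hsm : ContDiffOn ℝ (⊤ : ℕ∞) h V) (hpos : ∀ x ∈ V, 0 < h x)
    (σ : ℝ) (hσ : 0 < σ * logpd2 h i j 0) :
    ∃ α β γ δ η ε : ℝ, 0 < ε ∧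
      (∀ α' β' γ' δ' : ℝ, |α' - α| ≤ η → |β' - β| ≤ η → |γ' - γ| ≤ η → |δ' - δ| ≤ η →
        0 < σ * (α' * δ' - β' * γ')) ∧
      ∀ x ∈ Metric.ball (0 : Fin m → ℝ) ε,
        DifferentiableAt ℝ h x ∧
        DifferentiableAt ℝ (fun y => fderiv ℝ h y (Pi.single i (1:ℝ))) x ∧
        |h x - α| ≤ η ∧ |fderiv ℝ h x (Pi.single i 1) - β| ≤ η ∧
        |fderiv ℝ h x (Pi.single j 1) - γ| ≤ η ∧
        |fderiv ℝ (fun y => fderiv ℝ h y (Pi.single i (1:ℝ))) x (Pi.single j 1) - δ| ≤ η := by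
  have hf : ∀ e : Fin m → ℝ, ContDiffOn ℝ (⊤ : ℕ∞) (fun y => fderiv ℝ h y e) V := fun e =>
    (hsm.fderiv_of_isOpen hV (m := (⊤ : ℕ∞)) (by simp)).clm_apply contDiffOn_const
  have hff : ∀ e e' : Fin m → ℝ, ContDiffOn ℝ (⊤ : ℕ∞)
      (fun x => fderiv ℝ (fun y => fderiv ℝ h y e) x e') V := fun e e' =>
    ((hf e).fderiv_of_isOpen hV (m := (⊤ : ℕ∞)) (by simp)).clm_apply contDiffOn_const
  have hda : ∀ g : (Fin m → ℝ) → ℝ, ContDiffOn ℝ (⊤ : ℕ∞) g V → ∀ x ∈ V, DifferentiableAt ℝ g x :=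
    fun g hg x hx => (hg.differentiableOn (by simp)).differentiableAt (hV.mem_nhds hx)
  have key := logpd2_eq i j h V hV h0V (hda h hsm) (hda _ (hf _) 0 h0V) hpos
  have h0 := hpos 0 h0V
  have hN : 0 < σ * (h 0 * fderiv ℝ (fun y => fderiv ℝ h y (Pi.single i (1:ℝ))) 0 (Pi.single j 1) -
      fderiv ℝ h 0 (Pi.single i 1) * fderiv ℝ h 0 (Pi.single j 1)) := by
    rw [key]
    have : 0 < (h 0)^2 * (σ * logpd2 h i j 0) := by positivity
    linarith
  obtain ⟨η, hη, hall⟩ := sq_arith _ _ _ _ _ hN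
  have hc : ∀ g : (Fin m → ℝ) → ℝ, ContDiffOn ℝ (⊤ : ℕ∞) g V → ∀ᶠ x in nhds 0, |g x - g 0| ≤ η := by
    intro g hg
    have := (hda g hg 0 h0V).continuousAt
    filter_upwards [Metric.continuousAt_iff'.1 this η hη] with x hx
    rw [Real.dist_eq] at hx
    exact hx.le
  have hev := (hV.eventually_mem h0V).and ((hc h hsm).and ((hc _ (hf (Pi.single i 1))).and
    ((hc _ (hf (Pi.single j 1))).and (hc _ (hff (Pi.single i 1) (Pi.single j 1))))))
  obtain ⟨ε, hε, hb⟩ := Metric.eventually_nhds_iff_ball.1 hev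
  refine ⟨_, _, _, _, η, ε, hε, hall, fun x hx => ?_⟩
  obtain ⟨h1, h2, h3, h4, h5⟩ := hb x hx
  exact ⟨hda h hsm x h1, hda _ (hf _) x h1, h2, h3, h4, h5⟩

def cvec {m : ℕ} (i j : Fin m) (v : Fin m → ℝ) (k : Fin m) : ℝ :=
  if k = i then 0 else if k = j then 0 else v k

def dvec {m : ℕ} (i j : Fin m) (u v : Fin m → ℝ) (s t : Bool) (k : Fin m) : ℝ :=
  if k = i then (if s then u i else v i) else if k = j then (if t then u j else v j) else u k - v k

lemma boxVol_eq {m : ℕ} (i j : Fin m) (h : (Fin m → ℝ) → ℝ) (u v : Fin m → ℝ)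
    (hu : ∀ k, 0 < u k) (hv : ∀ k, v k < 0) (s t : Bool) :
    boxVol h i j u v s t = (∏ k, |dvec i j u v s t k|) *
      ∫ y in Set.Icc (0 : Fin m → ℝ) 1, h (Taff (cvec i j v) (dvec i j u v s t) y) := by
  have hne : ∀ k, dvec i j u v s t k ≠ 0 := by
    intro k
    have := hu k; have := hv k
    have := hu i; have := hv i
    have := hu j; have := hv j
    unfold dvec
    split_ifs <;> first | positivity | (apply ne_of_gt; linarith) | (apply ne_of_lt; linarith)
  rw [← change_var _ _ hne, boxVol]
  congr 2
  symm
  apply image_box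
  intro k
  have := hu k; have := hv k
  unfold dvec cvec
  by_cases hi : k = i
  · subst hi; cases s <;> simp [*]
  · by_cases hj : k = j
    · subst hj; cases t <;> simp [*]
    · left; simp only [hi, hj, if_false]
      exact ⟨by linarith, by simp, by ring⟩

lemma prod_abs {m : ℕ} (i j : Fin m) (u v : Fin m → ℝ) :
    (∏ k, |dvec i j u v true true k|) * (∏ k, |dvec i j u v false false k|) =
    (∏ k, |dvec i j u v false true k|) * (∏ k, |dvec i j u v true false k|) := by
  rw [← Finset.prod_mul_distrib, ← Finset.prod_mul_distrib]
  refine Finset.prod_congr rfl fun k _ => ?_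
  unfold dvec
  by_cases hi : k = i
  · simp [hi, mul_comm]
  · by_cases hj : k = j
    · have hji : j ≠ i := hj ▸ hi
      simp [hj, hji]
    · simp [hi, hj]

lemma prod_pos' {m : ℕ} (i j : Fin m) (u v : Fin m → ℝ)
    (hu : ∀ k, 0 < u k) (hv : ∀ k, v k < 0) (s t : Bool) :
    0 < ∏ k, |dvec i j u v s t k| := by
  refine Finset.prod_pos fun k _ => abs_pos.2 ?_
  have := hu k; have := hv k
  have := hu i; have := hv i
  have := hu j; have := hv j
  unfold dvec
  split_ifs <;> first | positivity | (apply ne_of_gt; linarith) | (apply ne_of_lt; linarith)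

lemma mem_ball' {m : ℕ} (i j : Fin m) (u v : Fin m → ℝ) (ε : ℝ) (hε : 0 < ε)
    (hu : ∀ k, 0 < u k) (hu' : ∀ k, u k < ε) (hv' : ∀ k, -ε < v k) (hv : ∀ k, v k < 0) (s t : Bool)
    (y : Fin m → ℝ) (hy : y ∈ Set.Icc (0 : Fin m → ℝ) 1) :
    Taff (cvec i j v) (dvec i j u v s t) y ∈ Metric.ball (0 : Fin m → ℝ) ε := by
  rw [mem_ball_zero_iff, pi_norm_lt_iff hε]
  intro k
  have h0 : 0 ≤ y k := hy.1 k
  have h1 : y k ≤ 1 := hy.2 k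
  have := hu k; have := hv k; have := hu' k; have := hv' k
  rw [Real.norm_eq_abs, abs_lt]
  unfold Taff dvec cvec
  by_cases hi : k = i
  · subst hi; cases s <;> simp <;> constructor <;> nlinarith
  · by_cases hj : k = j
    · subst hj; cases t <;> simp [hi] <;> constructor <;> nlinarith
    · simp only [hi, hj, if_false]; constructor <;> nlinarith

lemma shift_i {m : ℕ} (i j : Fin m) (u v : Fin m → ℝ) (t : Bool) (y : Fin m → ℝ) :
    Taff (cvec i j v) (dvec i j u v true t) y = Taff (cvec i j v) (dvec i j u v false t) y +
      ((u i - v i) * y i) • (Pi.single i 1 : Fin m → ℝ) := by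
  funext k
  by_cases hi : k = i
  · subst hi; simp [Taff, cvec, dvec]; ring
  · simp [Taff, cvec, dvec, hi]

lemma shift_j {m : ℕ} (i j : Fin m) (hij : i ≠ j) (u v : Fin m → ℝ) (s : Bool) (y : Fin m → ℝ) :
    Taff (cvec i j v) (dvec i j u v s true) y = Taff (cvec i j v) (dvec i j u v s false) y +
      ((u j - v j) * y j) • (Pi.single j 1 : Fin m → ℝ) := by
  funext k
  by_cases hj : k = j
  · subst hj; simp [Taff, cvec, dvec, hij.symm]; ring
  · simp [Taff, cvec, dvec, hj]

lemma scaled_abs (X β η a : ℝ) (ha : 0 < a) (h : |X - β * a| ≤ η * a) : |X / a - β| ≤ η := by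
  have : X / a - β = (X - β * a) / a := by field_simp
  rw [this, abs_div, abs_of_pos ha, div_le_iff₀ ha]; exact h

lemma core {m : ℕ} (i j : Fin m) (hij : i ≠ j) (h : (Fin m → ℝ) → ℝ)
    (V : Set (Fin m → ℝ)) (hV : IsOpen V) (h0V : (0 : Fin m → ℝ) ∈ V)
    (hsm : ContDiffOn ℝ (⊤ : ℕ∞) h V) (hpos : ∀ x ∈ V, 0 < h x)
    (σ : ℝ) (hσ : 0 < σ * logpd2 h i j 0) :
    ∃ ε : ℝ, 0 < ε ∧ ∀ u v : Fin m → ℝ,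
      (∀ k, 0 < u k) → (∀ k, u k < ε) → (∀ k, -ε < v k) → (∀ k, v k < 0) →
      0 < σ * (boxVol h i j u v true true * boxVol h i j u v false false -
        boxVol h i j u v false true * boxVol h i j u v true false) := by
  obtain ⟨α, β, γ, δ, η, ε, hε, hall, hB⟩ := analytic i j h V hV h0V hsm hpos σ hσ
  refine ⟨ε, hε, fun u v hu hu' hv' hv => ?_⟩
  rw [boxVol_eq i j h u v hu hv, boxVol_eq i j h u v hu hv, boxVol_eq i j h u v hu hv,
    boxVol_eq i j h u v hu hv]
  have hcx : Convex ℝ (Metric.ball (0 : Fin m → ℝ) ε) := convex_ball _ _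
  have hmem := mem_ball' i j u v ε hε hu hu' hv' hv
  set P : Bool → Bool → (Fin m → ℝ) → (Fin m → ℝ) :=
    fun s t y => Taff (cvec i j v) (dvec i j u v s t) y with hP
  have hint : ∀ s t, IntegrableOn (fun y => h (P s t y)) (Set.Icc 0 1) := by
    intro s t
    apply ContinuousOn.integrableOn_compact isCompact_Icc
    intro y hy
    have h1 : ContinuousAt h (P s t y) := (hB _ (hmem s t y hy)).1.continuousAt
    have h2 : Continuous (P s t) := by
      simp only [hP]; unfold Taff; fun_prop
    exact (ContinuousAt.comp (f := P s t) h1 h2.continuousAt).continuousWithinAt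
  have hcont : ∀ w : (Fin m → ℝ) → ℝ, Continuous w → IntegrableOn w (Set.Icc 0 1) := fun w hw =>
    hw.continuousOn.integrableOn_compact isCompact_Icc
  set I : Bool → Bool → ℝ := fun s t => ∫ y in Set.Icc (0 : Fin m → ℝ) 1, h (P s t y) with hI
  have hi0 : 0 < u i - v i := by linarith [hu i, hv i]
  have hj0 : 0 < u j - v j := by linarith [hu j, hv j]
  have ya : ∀ k, ∀ y ∈ Set.Icc (0 : Fin m → ℝ) 1, 0 ≤ y k := fun k y hy => hy.1 k
  have e1 : |I false false - α| ≤ η := by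
    have := int_bound measurableSet_Icc (fun y => h (P false false y)) (fun _ => 1) α η
      (hint _ _) (hcont _ continuous_const) (fun y hy => by
        simpa using (hB _ (hmem false false y hy)).2.2.1)
    simpa only [int_one, mul_one] using this
  have e2 : |(I true false - I false false) - β * ((u i - v i) * (1 / 2))| ≤
      η * ((u i - v i) * (1 / 2)) := by
    have := int_bound measurableSet_Icc (fun y => h (P true false y) - h (P false false y))
      (fun y => (u i - v i) * y i) β η
      ((hint _ _).sub (hint _ _)) (hcont _ (by fun_prop)) (fun y hy => by
        have q := hmem true false y hy
        have e : P true false y = _ := shift_i i j u v false y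
        rw [shift_i] at q
        rw [e]
        exact mvt_dir h hcx _ β η (fun x hx => (hB x hx).1) (fun x hx => (hB x hx).2.2.2.1) _ _
          (mul_nonneg hi0.le (ya i y hy)) (hmem false false y hy) q)
    rw [integral_sub (hint _ _) (hint _ _), integral_const_mul, int_coord] at this
    exact this
  have e3 : |(I false true - I false false) - γ * ((u j - v j) * (1 / 2))| ≤
      η * ((u j - v j) * (1 / 2)) := by
    have := int_bound measurableSet_Icc (fun y => h (P false true y) - h (P false false y))
      (fun y => (u j - v j) * y j) γ η
      ((hint _ _).sub (hint _ _)) (hcont _ (by fun_prop)) (fun y hy => by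
        have q := hmem false true y hy
        have e : P false true y = _ := shift_j i j hij u v false y
        rw [shift_j i j hij] at q
        rw [e]
        exact mvt_dir h hcx _ γ η (fun x hx => (hB x hx).1) (fun x hx => (hB x hx).2.2.2.2.1) _ _
          (mul_nonneg hj0.le (ya j y hy)) (hmem false false y hy) q)
    rw [integral_sub (hint _ _) (hint _ _), integral_const_mul, int_coord] at this
    exact this
  have e4 : |(I true true - I true false - I false true + I false false) -
      δ * ((u i - v i) * (u j - v j) * (1 / 4))| ≤ η * ((u i - v i) * (u j - v j) * (1 / 4)) := by
    have := int_bound measurableSet_Icc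
      (fun y => h (P true true y) - h (P true false y) - h (P false true y) + h (P false false y))
      (fun y => (u i - v i) * (u j - v j) * (y i * y j)) δ η
      ((((hint _ _).sub (hint _ _)).sub (hint _ _)).add (hint _ _)) (hcont _ (by fun_prop))
      (fun y hy => by
        have q1 := hmem true false y hy
        have q2 := hmem false true y hy
        have q3 := hmem true true y hy
        have r1 : P true false y = _ := shift_i i j u v false y
        have r2 : P false true y = _ := shift_j i j hij u v false y
        have r3 : P true true y = _ := shift_i i j u v true y
        rw [shift_i i j u v true y, shift_j i j hij] at q3
        rw [shift_j i j hij] at r3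
        rw [shift_i] at q1
        rw [shift_j i j hij] at q2
        rw [r1, r2, r3]
        have := mvt_mixed h hcx _ (Pi.single j 1) δ η (fun x hx => (hB x hx).1)
          (fun x hx => (hB x hx).2.1) (fun x hx => (hB x hx).2.2.2.2.2) _ _ _
          (mul_nonneg hi0.le (ya i y hy)) (mul_nonneg hj0.le (ya j y hy))
          (hmem false false y hy) q1 q2 q3
        rw [show (u i - v i) * (u j - v j) * (y i * y j) =
          ((u i - v i) * y i) * ((u j - v j) * y j) by ring]
        exact this)
    have i1 : IntegrableOn (fun y => h (P true true y) - h (P true false y)) (Set.Icc 0 1) :=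
      (hint _ _).sub (hint _ _)
    have i2 : IntegrableOn (fun y => h (P true true y) - h (P true false y) - h (P false true y))
      (Set.Icc 0 1) := i1.sub (hint _ _)
    rw [integral_add i2 (hint _ _), integral_sub i1 (hint _ _), integral_sub (hint _ _) (hint _ _),
      integral_const_mul, int_coord2 i j hij] at this
    exact this
  have fin := hall _ _ _ _ e1 (scaled_abs _ _ _ _ (by positivity) e2)
    (scaled_abs _ _ _ _ (by positivity) e3) (scaled_abs _ _ _ _ (by positivity) e4)
  have hC := prod_abs i j u v
  have hp1 := prod_pos' i j u v hu hv true true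
  have hp2 := prod_pos' i j u v hu hv false false
  have fin2 : 0 < σ * (I true true * I false false - I false true * I true false) := by
    have h1 : 0 < (u i - v i) * (u j - v j) * (1 / 4) := by positivity
    have h2 := mul_pos h1 fin
    refine lt_of_lt_of_eq h2 ?_
    have := hi0.ne'
    have := hj0.ne'
    field_simp
    ring
  have h3 := mul_pos (mul_pos hp1 hp2) fin2
  change 0 < σ * (_ * I true true * (_ * I false false) - _ * I false true * (_ * I true false))
  refine lt_of_lt_of_eq h3 ?_
  linear_combination -σ * I false true * I true false * hC

/-- Quantitative Tabachnikov criterion: if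
`κ = ∂²(log h)/∂x_i∂x_j(0)` then for all sufficiently small boxes around `0` subdivided
by the hyperplanes `{x_i = 0}` and `{x_j = 0}` into pieces of `h`-volumes
`a = V_{−+}, b = V_{++}, c = V_{+−}, d = V_{−−}`, one has `ac < bd` when `κ > 0`
and `ac > bd` when `κ < 0`. -/
theorem stmt16 {m : ℕ} (hm : 2 ≤ m) (i j : Fin m) (hij : i ≠ j)
    (h : (Fin m → ℝ) → ℝ)
    (V : Set (Fin m → ℝ)) (hV : IsOpen V) (h0V : (0 : Fin m → ℝ) ∈ V)
    (hsm : ContDiffOn ℝ (⊤ : ℕ∞) h V) (hpos : ∀ x ∈ V, 0 < h x) :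
    ∃ ε : ℝ, 0 < ε ∧ ∀ u v : Fin m → ℝ,
      (∀ k, 0 < u k) → (∀ k, u k < ε) → (∀ k, -ε < v k) → (∀ k, v k < 0) →
      (0 < logpd2 h i j 0 →
        boxVol h i j u v false true * boxVol h i j u v true false <
          boxVol h i j u v true true * boxVol h i j u v false false) ∧
      (logpd2 h i j 0 < 0 →
        boxVol h i j u v true true * boxVol h i j u v false false <
          boxVol h i j u v false true * boxVol h i j u v true false) := by
  rcases lt_trichotomy (logpd2 h i j 0) 0 with hk | hk | hk
  · obtain ⟨ε, hε, H⟩ := core i j hij h V hV h0V hsm hpos (-1) (by linarith)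
    refine ⟨ε, hε, fun u v a b c d => ⟨fun h' => absurd h' hk.not_gt, fun _ => ?_⟩⟩
    have := H u v a b c d
    linarith
  · exact ⟨1, one_pos, fun u v _ _ _ _ => ⟨fun h' => absurd h' (by simp [hk]),
      fun h' => absurd h' (by simp [hk])⟩⟩
  · obtain ⟨ε, hε, H⟩ := core i j hij h V hV h0V hsm hpos 1 (by linarith)
    refine ⟨ε, hε, fun u v a b c d => ⟨fun _ => ?_, fun h' => absurd h' hk.not_gt⟩⟩
    have := H u v a b c d
    linarith
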